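/- Let f : V → [0,∞] be weakly lower semicontinuous on a separable real Hilbert space V, let A : V → W be a bounded linear operator with ‖A‖² < γ, let d ∈ W, and define 𝒥(x) = f(x) + ½‖Ax−d‖²_W and 𝒥_γ(x) = S_γ²(f)(x) + ½‖Ax−d‖²_W. Then: (i) every local minimizer x of 𝒥_γ satisfies S_γ²(f)(x) = f(x) (hence 𝒥_γ(x) = 𝒥(x)) and is a local minimizer of 𝒥; (ii) every strict local minimizer of 𝒥_γ is a strict local minimizer of 𝒥; (iii) the set of global minimizers of 𝒥_γ equals the set of global minimizers of 𝒥. -/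

import Mathlib

open scoped InnerProductSpace RealInnerProductSpace ENNReal Topology
open Filter

noncomputable section

/-- The S-transform `S_γ(f)(y) = sup_x ( -f(x) - (γ/2)‖x-y‖² )` for
extended-real-valued functions on a real inner product space. -/
def SgammaE {V : Type*} [NormedAddCommGroup V] [InnerProductSpace ℝ V]
    (γ : ℝ) (f : V → EReal) (y : V) : EReal :=
  ⨆ x : V, (-(f x) - (((γ / 2) * ‖x - y‖ ^ 2 : ℝ) : EReal))

/-- The S-transform of a `[0,∞]`-valued function. -/
def Sgamma {V : Type*} [NormedAddCommGroup V] [InnerProductSpace ℝ V]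
    (γ : ℝ) (f : V → ℝ≥0∞) (y : V) : EReal :=
  SgammaE γ (fun x => (f x : EReal)) y

/-- The twice iterated S-transform `S_γ²(f) = S_γ(S_γ(f))`. -/
def Sgamma2 {V : Type*} [NormedAddCommGroup V] [InnerProductSpace ℝ V]
    (γ : ℝ) (f : V → ℝ≥0∞) : V → EReal :=
  SgammaE γ (Sgamma γ f)

/-- Convexity for extended-real-valued functions. -/
def EConvexOn {V : Type*} [NormedAddCommGroup V] [InnerProductSpace ℝ V]
    (h : V → EReal) : Prop :=
  ∀ x y : V, ∀ a b : ℝ, 0 ≤ a → 0 ≤ b → a + b = 1 →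
    h (a • x + b • y) ≤ (a : EReal) * h x + (b : EReal) * h y

section STransform

variable {V : Type*} [NormedAddCommGroup V] [InnerProductSpace ℝ V] {γ : ℝ} {f : V → ℝ≥0∞}

theorem EReal.sub_coe_le_coe_iff (a : EReal) (q c : ℝ) :
    a - (q : EReal) ≤ (c : EReal) ↔ a ≤ ((c + q : ℝ) : EReal) := by
  rw [EReal.sub_le_iff_le_add (Or.inl (EReal.coe_ne_bot q)) (Or.inl (EReal.coe_ne_top q)),
    EReal.coe_add]

theorem Sgamma2_le_coe_iff (x : V) (c : ℝ) :
    Sgamma2 γ f x ≤ (c : EReal) ↔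
      ∀ y, -Sgamma γ f y ≤ ((c + γ / 2 * ‖y - x‖ ^ 2 : ℝ) : EReal) := by
  simp only [Sgamma2, SgammaE, iSup_le_iff, EReal.sub_coe_le_coe_iff]

theorem Sgamma2_le (x : V) : Sgamma2 γ f x ≤ (f x : EReal) := by
  refine iSup_le fun y => ?_
  rw [EReal.sub_le_iff_le_add (Or.inl (EReal.coe_ne_bot _)) (Or.inl (EReal.coe_ne_top _)),
    EReal.neg_le]
  have h : -(f x : EReal) - ((γ / 2 * ‖x - y‖ ^ 2 : ℝ) : EReal) ≤ Sgamma γ f y :=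
    le_iSup (fun z : V => -(f z : EReal) - ((γ / 2 * ‖z - y‖ ^ 2 : ℝ) : EReal)) x
  rwa [norm_sub_rev y x, EReal.neg_add (Or.inr (EReal.coe_ne_top _)) (Or.inr (EReal.coe_ne_bot _))]

/-- A quadratic minorant of `f` of curvature `-γ` is a minorant of `S_γ²(f)`. -/
theorem le_Sgamma2_of_forall_le (x y : V) (c : ℝ)
    (h : ∀ z, ((c - γ / 2 * ‖z - y‖ ^ 2 : ℝ) : EReal) ≤ (f z : EReal)) :
    ((c - γ / 2 * ‖x - y‖ ^ 2 : ℝ) : EReal) ≤ Sgamma2 γ f x := by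
  have hS : Sgamma γ f y ≤ ((-c : ℝ) : EReal) := by
    refine iSup_le fun z => ?_
    rw [EReal.sub_coe_le_coe_iff, EReal.neg_le, ← EReal.coe_neg]
    convert h z using 2
    ring
  calc ((c - γ / 2 * ‖x - y‖ ^ 2 : ℝ) : EReal)
      = (c : EReal) - ((γ / 2 * ‖y - x‖ ^ 2 : ℝ) : EReal) := by
        rw [norm_sub_rev y x, EReal.coe_sub]
    _ ≤ -Sgamma γ f y - ((γ / 2 * ‖y - x‖ ^ 2 : ℝ) : EReal) := by
        refine EReal.sub_le_sub ?_ le_rfl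
        rw [EReal.le_neg]
        simpa using hS
    _ ≤ Sgamma2 γ f x :=
        le_iSup (fun z : V => -Sgamma γ f z - ((γ / 2 * ‖z - x‖ ^ 2 : ℝ) : EReal)) y

theorem Sgamma2_nonneg (hγ : 0 ≤ γ) (x : V) : 0 ≤ Sgamma2 γ f x := by
  have h := le_Sgamma2_of_forall_le (γ := γ) (f := f) x x 0 fun z =>
    (EReal.coe_nonpos.2 (by have : 0 ≤ γ / 2 * ‖z - x‖ ^ 2 := by positivity
                            linarith)).trans (EReal.coe_ennreal_nonneg _)
  simpa using h

theorem norm_add_smul_sub_sq (x y v : V) (t : ℝ) :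
    ‖v - (x + t • (y - x))‖ ^ 2 =
      (1 - t) * ‖v - x‖ ^ 2 + t * ‖v - y‖ ^ 2 - t * (1 - t) * ‖y - x‖ ^ 2 := by
  have h₁ : v - (x + t • (y - x)) = (v - x) - t • (y - x) := by abel
  have h₂ : v - y = (v - x) - (y - x) := by abel
  rw [h₁, h₂, norm_sub_sq_real, norm_sub_sq_real (v - x) (y - x), inner_smul_right, norm_smul,
    mul_pow, Real.norm_eq_abs, sq_abs]
  ring

/-- `S_γ²(f) + (γ/2)‖·‖²` is convex. -/
theorem Sgamma2_segment_le {x y : V} {a b t : ℝ} (ht : 0 ≤ t) (ht1 : t ≤ 1)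
    (ha : Sgamma2 γ f x ≤ (a : EReal)) (hb : Sgamma2 γ f y ≤ (b : EReal)) :
    Sgamma2 γ f (x + t • (y - x)) ≤
      (((1 - t) * a + t * b + γ / 2 * (t * (1 - t) * ‖y - x‖ ^ 2) : ℝ) : EReal) := by
  rw [Sgamma2_le_coe_iff] at *
  intro v
  have ha := ha v
  have hb := hb v
  generalize -Sgamma γ f v = s at ha hb ⊢
  induction s with
  | bot => exact bot_le
  | top => exact absurd ha (not_le.2 (EReal.coe_lt_top _))
  | coe s =>
    rw [EReal.coe_le_coe_iff] at ha hb ⊢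
    rw [norm_add_smul_sub_sq]
    have h₁ := mul_le_mul_of_nonneg_left ha (sub_nonneg.2 ht1 : (0 : ℝ) ≤ 1 - t)
    have h₂ := mul_le_mul_of_nonneg_left hb ht
    linarith

/-- A local quadratic lower bound on the convex function `S_γ²(f) + (γ/2)‖· - y‖²` which is strict
away from `x` forces a uniform gap outside the ball. -/
theorem Sgamma2_gap_of_local {x y : V} {a m r : ℝ} (hr : 0 < r) (hm : 0 ≤ m)
    (ha : Sgamma2 γ f x = (a : EReal))
    (hloc : ∀ z, ‖z - x‖ ≤ r →
      ((a + γ / 2 * ‖x - y‖ ^ 2 - γ / 2 * ‖z - y‖ ^ 2 + m / 2 * ‖z - x‖ ^ 2 : ℝ) : EReal) ≤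
        Sgamma2 γ f z) {z : V} (hz : r ≤ ‖z - x‖) :
    ((a + γ / 2 * ‖x - y‖ ^ 2 - γ / 2 * ‖z - y‖ ^ 2 + m / 2 * r ^ 2 : ℝ) : EReal) ≤
      Sgamma2 γ f z := by
  refine EReal.le_of_forall_lt_iff_le.1 fun b hb => ?_
  have hn : 0 < ‖z - x‖ := hr.trans_le hz
  set t := r / ‖z - x‖
  have ht : 0 < t := by positivity
  have ht1 : t ≤ 1 := (div_le_one hn).2 hz
  have htn : t * ‖z - x‖ = r := div_mul_cancel₀ r hn.ne'
  have hp : ‖x + t • (z - x) - x‖ = r := by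
    rw [add_sub_cancel_left, norm_smul, Real.norm_of_nonneg ht.le, htn]
  have h := (hloc _ hp.le).trans (Sgamma2_segment_le ht.le ht1 ha.le hb.le)
  rw [EReal.coe_le_coe_iff, hp, norm_sub_rev (x + t • (z - x)) y, norm_add_smul_sub_sq, norm_sub_rev y x,
    norm_sub_rev y z] at h
  rw [EReal.coe_le_coe_iff]
  have hmr : t * (m / 2 * r ^ 2) ≤ m / 2 * r ^ 2 :=
    mul_le_of_le_one_left (by positivity) ht1
  have h' : t * (a + γ / 2 * ‖x - y‖ ^ 2 - γ / 2 * ‖z - y‖ ^ 2 + m / 2 * r ^ 2) ≤ t * b := by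
    linarith
  exact le_of_mul_le_mul_left h' ht

end STransform

section Minimizers

variable {V W : Type*} [NormedAddCommGroup V] [InnerProductSpace ℝ V] [CompleteSpace V]
  [NormedAddCommGroup W] [InnerProductSpace ℝ W] [CompleteSpace W]
  {γ : ℝ} {f : V → ℝ≥0∞}

/-- The tangent paraboloid of curvature `-γ` at `x` lies below `-½‖A·-d‖²`, with a quadratic
gap. -/
theorem exists_tangent_paraboloid (A : V →L[ℝ] W) (d : W) (hA : ‖A‖ ^ 2 < γ) (x : V) :
    ∃ y : V, ∀ z : V,
      γ / 2 * ‖x - y‖ ^ 2 - γ / 2 * ‖z - y‖ ^ 2 + (γ - ‖A‖ ^ 2) / 2 * ‖z - x‖ ^ 2 ≤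
        1 / 2 * ‖A x - d‖ ^ 2 - 1 / 2 * ‖A z - d‖ ^ 2 := by
  have hγ : 0 < γ := (sq_nonneg _).trans_lt hA
  set b : V := ContinuousLinearMap.adjoint A (A x - d) with hb
  refine ⟨x - γ⁻¹ • b, fun z => ?_⟩
  have h₁ : z - (x - γ⁻¹ • b) = (z - x) + γ⁻¹ • b := by abel
  have h₂ : A z - d = A (z - x) + (A x - d) := by rw [map_sub]; abel
  have h₃ : ⟪A (z - x), A x - d⟫_ℝ = ⟪z - x, b⟫_ℝ := by
    rw [hb, ContinuousLinearMap.adjoint_inner_right]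
  have h₄ : ‖A (z - x)‖ ^ 2 ≤ ‖A‖ ^ 2 * ‖z - x‖ ^ 2 := by
    rw [← mul_pow]
    exact pow_le_pow_left₀ (norm_nonneg _) (A.le_opNorm _) 2
  have h₅ : γ / 2 * (2 * (γ⁻¹ * ⟪z - x, b⟫_ℝ)) = ⟪z - x, b⟫_ℝ := by field_simp
  rw [h₁, h₂, norm_add_sq_real (z - x), norm_add_sq_real (A (z - x)), h₃, inner_smul_right,
    sub_sub_cancel]
  linarith

/-- At a local minimizer of `S_γ²(f) + ½‖A·-d‖²` the transform `S_γ²(f)` agrees with `f`. -/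
theorem Sgamma2_eq_of_isLocalMin (hf : LowerSemicontinuous f) (A : V →L[ℝ] W) (d : W)
    (hA : ‖A‖ ^ 2 < γ) {x : V}
    (hx : ∃ U ∈ 𝓝 x, ∀ y ∈ U,
      Sgamma2 γ f x + ((1 / 2 * ‖A x - d‖ ^ 2 : ℝ) : EReal) ≤
        Sgamma2 γ f y + ((1 / 2 * ‖A y - d‖ ^ 2 : ℝ) : EReal)) :
    Sgamma2 γ f x = (f x : EReal) := by
  obtain ⟨U, hU, hmin⟩ := hx
  have hγ : 0 < γ := (sq_nonneg _).trans_lt hA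
  by_contra hne
  have hlt : Sgamma2 γ f x < (f x : EReal) := lt_of_le_of_ne (Sgamma2_le x) hne
  obtain ⟨a, ha⟩ : ∃ a : ℝ, Sgamma2 γ f x = (a : EReal) :=
    ⟨_, (EReal.coe_toReal hlt.ne_top
      (EReal.bot_lt_zero.trans_le (Sgamma2_nonneg hγ.le x)).ne').symm⟩
  have ha0 : 0 ≤ a := by
    have := Sgamma2_nonneg (f := f) hγ.le x
    rwa [ha, EReal.coe_nonneg] at this
  obtain ⟨e, hae, hef⟩ := EReal.lt_iff_exists_real_btwn.1 (ha ▸ hlt)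
  rw [EReal.coe_lt_coe_iff] at hae
  obtain ⟨y, hy⟩ := exists_tangent_paraboloid A d hA x
  have hlsc : ∀ᶠ z in 𝓝 x, (e : EReal) < (f z : EReal) := by
    have he : (e : EReal) = (ENNReal.ofReal e : EReal) := by
      rw [EReal.coe_ennreal_ofReal, max_eq_left (ha0.trans hae.le)]
    rw [he, EReal.coe_ennreal_lt_coe_ennreal_iff] at hef
    filter_upwards [hf x _ hef] with z hz
    rwa [he, EReal.coe_ennreal_lt_coe_ennreal_iff]
  have hcont : ∀ᶠ z in 𝓝 x, γ / 2 * ‖x - y‖ ^ 2 - (e - a) / 2 < γ / 2 * ‖z - y‖ ^ 2 := by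
    have hc : Continuous fun z : V => γ / 2 * ‖z - y‖ ^ 2 := by fun_prop
    exact hc.continuousAt.eventually_const_lt (by linarith)
  obtain ⟨r, hr, hball⟩ := Metric.nhds_basis_closedBall.mem_iff.1
    (Filter.inter_mem hU (Filter.inter_mem hlsc hcont))
  replace hball : ∀ z, ‖z - x‖ ≤ r → _ := fun z hz =>
    hball (mem_closedBall_iff_norm.2 hz)
  have hm : 0 < γ - ‖A‖ ^ 2 := sub_pos.2 hA
  have hloc : ∀ z, ‖z - x‖ ≤ r →
      ((a + γ / 2 * ‖x - y‖ ^ 2 - γ / 2 * ‖z - y‖ ^ 2 +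
        (γ - ‖A‖ ^ 2) / 2 * ‖z - x‖ ^ 2 : ℝ) : EReal) ≤ Sgamma2 γ f z := by
    intro z hz
    have h := hmin z (hball z hz).1
    rw [ha, ← EReal.coe_add] at h
    refine le_trans ?_ (EReal.sub_le_of_le_add h)
    rw [← EReal.coe_sub, EReal.coe_le_coe_iff]
    linarith [hy z]
  set δ : ℝ := min ((e - a) / 2) ((γ - ‖A‖ ^ 2) / 2 * r ^ 2)
  have hδ0 : 0 < δ := lt_min (by linarith) (by positivity)
  have hδ₁ : δ ≤ (e - a) / 2 := min_le_left _ _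
  have hδ₂ : δ ≤ (γ - ‖A‖ ^ 2) / 2 * r ^ 2 := min_le_right _ _
  have hgap := le_Sgamma2_of_forall_le (γ := γ) (f := f) x y
    (a + γ / 2 * ‖x - y‖ ^ 2 + δ) fun z => by
      rcases le_total ‖z - x‖ r with hz | hz
      · obtain ⟨-, h₁, h₂⟩ := hball z hz
        refine le_trans ?_ (le_of_lt h₁)
        rw [EReal.coe_le_coe_iff]
        rw [Set.mem_ofPred_eq] at h₂
        linarith
      · refine le_trans ?_ ((Sgamma2_gap_of_local hr hm.le ha hloc hz).trans (Sgamma2_le z))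
        rw [EReal.coe_le_coe_iff]
        linarith
  rw [ha, EReal.coe_le_coe_iff] at hgap
  linarith

/-- A lower bound for `f + ½‖A·-d‖²` is a lower bound for `S_γ²(f) + ½‖A·-d‖²`. -/
theorem le_Sgamma2_add_of_forall_le (A : V →L[ℝ] W) (d : W) (hA : ‖A‖ ^ 2 < γ) {c : EReal}
    (hc : ∀ z, c ≤ (f z : EReal) + ((1 / 2 * ‖A z - d‖ ^ 2 : ℝ) : EReal)) (x : V) :
    c ≤ Sgamma2 γ f x + ((1 / 2 * ‖A x - d‖ ^ 2 : ℝ) : EReal) := by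
  refine EReal.ge_of_forall_gt_iff_ge.1 fun b hb => ?_
  obtain ⟨y, hy⟩ := exists_tangent_paraboloid A d hA x
  have h := le_Sgamma2_of_forall_le (γ := γ) (f := f) x y
    (b - 1 / 2 * ‖A x - d‖ ^ 2 + γ / 2 * ‖x - y‖ ^ 2) fun z => by
      refine le_trans ?_ (EReal.sub_le_of_le_add (hb.le.trans (hc z)))
      rw [← EReal.coe_sub, EReal.coe_le_coe_iff]
      have : 0 ≤ (γ - ‖A‖ ^ 2) / 2 * ‖z - x‖ ^ 2 :=
        mul_nonneg (by linarith) (sq_nonneg _)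
      linarith [hy z]
  refine le_trans ?_ (add_le_add_left h _)
  rw [← EReal.coe_add, EReal.coe_le_coe_iff]
  linarith

end Minimizers

/-- case `‖A‖² < γ`. With `f` weakly l.s.c., `𝒥(x) = f(x) + ½‖Ax-d‖²` and
`𝒥_γ(x) = S_γ²(f)(x) + ½‖Ax-d‖²`: (i) every local minimizer `x` of `𝒥_γ` satisfies
`S_γ²(f)(x) = f(x)` and is a local minimizer of `𝒥`; (ii) every strict local minimizer of `𝒥_γ`
is a strict local minimizer of `𝒥`; (iii) the global minimizers of `𝒥_γ` and `𝒥` coincide. -/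
theorem statement17 {V W : Type*}
    [NormedAddCommGroup V] [InnerProductSpace ℝ V] [CompleteSpace V]
    [TopologicalSpace.SeparableSpace V]
    [NormedAddCommGroup W] [InnerProductSpace ℝ W] [CompleteSpace W]
    [TopologicalSpace.SeparableSpace W]
    (f : V → ℝ≥0∞) (hwlsc : LowerSemicontinuous (α := WeakSpace ℝ V) f)
    (A : V →L[ℝ] W) (d : W) (γ : ℝ) (hA : ‖A‖ ^ 2 < γ) :
    (∀ x : V,
      (∃ U ∈ nhds x, ∀ y ∈ U,
          Sgamma2 γ f x + ((1 / 2 * ‖A x - d‖ ^ 2 : ℝ) : EReal) ≤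
            Sgamma2 γ f y + ((1 / 2 * ‖A y - d‖ ^ 2 : ℝ) : EReal)) →
      Sgamma2 γ f x = (f x : EReal) ∧
      ∃ U ∈ nhds x, ∀ y ∈ U,
          (f x : EReal) + ((1 / 2 * ‖A x - d‖ ^ 2 : ℝ) : EReal) ≤
            (f y : EReal) + ((1 / 2 * ‖A y - d‖ ^ 2 : ℝ) : EReal)) ∧
    (∀ x : V,
      (∃ U ∈ nhds x, ∀ y ∈ U, y ≠ x →
          Sgamma2 γ f x + ((1 / 2 * ‖A x - d‖ ^ 2 : ℝ) : EReal) <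
            Sgamma2 γ f y + ((1 / 2 * ‖A y - d‖ ^ 2 : ℝ) : EReal)) →
      ∃ U ∈ nhds x, ∀ y ∈ U, y ≠ x →
          (f x : EReal) + ((1 / 2 * ‖A x - d‖ ^ 2 : ℝ) : EReal) <
            (f y : EReal) + ((1 / 2 * ‖A y - d‖ ^ 2 : ℝ) : EReal)) ∧
    ({x : V | ∀ y : V,
        Sgamma2 γ f x + ((1 / 2 * ‖A x - d‖ ^ 2 : ℝ) : EReal) ≤
          Sgamma2 γ f y + ((1 / 2 * ‖A y - d‖ ^ 2 : ℝ) : EReal)} =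
      {x : V | ∀ y : V,
        (f x : EReal) + ((1 / 2 * ‖A x - d‖ ^ 2 : ℝ) : EReal) ≤
          (f y : EReal) + ((1 / 2 * ‖A y - d‖ ^ 2 : ℝ) : EReal)}) := by
  have hf : LowerSemicontinuous f :=
    fun x b hb => (toWeakSpaceCLM ℝ V).continuous.continuousAt.eventually (hwlsc x b hb)
  have hle : ∀ y : V, Sgamma2 γ f y + ((1 / 2 * ‖A y - d‖ ^ 2 : ℝ) : EReal) ≤
      (f y : EReal) + ((1 / 2 * ‖A y - d‖ ^ 2 : ℝ) : EReal) :=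
    fun y => add_le_add_left (Sgamma2_le y) _
  refine ⟨fun x hx => ?_, fun x hx => ?_, Set.ext fun x => ⟨fun hx y => ?_, fun hx y => ?_⟩⟩
  · have heq := Sgamma2_eq_of_isLocalMin hf A d hA hx
    obtain ⟨U, hU, hmin⟩ := hx
    exact ⟨heq, U, hU, fun y hy => heq ▸ (hmin y hy).trans (hle y)⟩
  · obtain ⟨U, hU, hmin⟩ := hx
    have heq : Sgamma2 γ f x = (f x : EReal) := by
      refine Sgamma2_eq_of_isLocalMin hf A d hA ⟨U, hU, fun y hy => ?_⟩
      rcases eq_or_ne y x with rfl | hne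
      · exact le_rfl
      · exact (hmin y hy hne).le
    exact ⟨U, hU, fun y hy hne => heq ▸ (hmin y hy hne).trans_le (hle y)⟩
  · have heq := Sgamma2_eq_of_isLocalMin hf A d hA ⟨Set.univ, univ_mem, fun z _ => hx z⟩
    exact heq ▸ (hx y).trans (hle y)
  · exact (hle x).trans (le_Sgamma2_add_of_forall_le A d hA hx y)
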